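/- In the decay setup, assume additionally that ‖v‖_b ≤ 2𝔠‖v₀‖. Then for every t ≥ 0: ‖v_t − V(t)v₀‖ ≤ 4Ĉ𝔠² ‖v₀‖² e^{−bt}; in particular sup_{t≥0} e^{bt} ‖v_t − V(t)v₀‖ ≤ 4Ĉ𝔠² ‖v₀‖², so the amplitude agrees with its linearization V(t)v₀ up to an error quadratic in ‖v₀‖. -/

import Mathlib

/-!
The equation for `v` exhibits `v_t - V(t)v₀` as a Duhamel integral minus a finite-rank image of the
tail `∫_t^∞ G`. Since `‖v_s‖` is of order `‖v₀‖ e^{-bs}` and `G` is quadratic in `v`, the forcing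
`G(s)` is of order `‖v₀‖² e^{-2bs}`. Its decay is faster than the rate `b` of the propagator, so
the Duhamel integral still decays at rate `b`, with no secular factor `t`, and the tail decays even
at rate `2b`.
-/

open MeasureTheory
open scoped InnerProductSpace BigOperators

section ExponentialIntegrals

variable {E F : Type*} [NormedAddCommGroup E] [NormedAddCommGroup F] [NormedSpace ℝ F]

lemma integral_exp_neg_mul_le_inv {r t : ℝ} (hr : 0 < r) (ht : 0 ≤ t) :
    ∫ s in (0:ℝ)..t, Real.exp (-r * s) ≤ r⁻¹ := by
  calc ∫ s in (0:ℝ)..t, Real.exp (-r * s)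
      = ∫ s in Set.Ioc 0 t, Real.exp (-r * s) := intervalIntegral.integral_of_le ht
    _ ≤ ∫ s in Set.Ioi 0, Real.exp (-r * s) :=
        setIntegral_mono_set (integrableOn_exp_mul_Ioi (neg_lt_zero.2 hr) 0)
          (ae_of_all _ fun s => (Real.exp_pos _).le) Set.Ioc_subset_Ioi_self.eventuallyLE
    _ = r⁻¹ := by
        rw [integral_exp_mul_Ioi (neg_lt_zero.2 hr), mul_zero, Real.exp_zero, neg_div_neg_eq,
          one_div]

lemma norm_integral_Ioi_le_of_norm_le_exp {a K t : ℝ} (ha : 0 < a) {f : ℝ → F}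
    (hf : ∀ s, t < s → ‖f s‖ ≤ K * Real.exp (-a * s)) :
    ‖∫ s in Set.Ioi t, f s‖ ≤ K / a * Real.exp (-a * t) := by
  have hneg : -a < 0 := neg_lt_zero.2 ha
  calc ‖∫ s in Set.Ioi t, f s‖
      ≤ ∫ s in Set.Ioi t, K * Real.exp (-a * s) :=
        norm_integral_le_of_norm_le ((integrableOn_exp_mul_Ioi hneg t).const_mul K)
          ((ae_restrict_iff' measurableSet_Ioi).2 (ae_of_all _ hf))
    _ = K / a * Real.exp (-a * t) := by
        rw [integral_const_mul, integral_exp_mul_Ioi hneg, neg_div_neg_eq]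
        ring

lemma norm_duhamel_integral_le {𝕜 : Type*} [NontriviallyNormedField 𝕜] [NormedSpace 𝕜 E]
    [NormedSpace 𝕜 F] {a b c K t : ℝ} (hab : b < a) (ht : 0 ≤ t) {V : ℝ → E →L[𝕜] F}
    (hV : ∀ r, 0 ≤ r → ‖V r‖ ≤ c * Real.exp (-b * r)) {f : ℝ → E}
    (hf : ∀ s, 0 ≤ s → ‖f s‖ ≤ K * Real.exp (-a * s)) :
    ‖∫ s in (0:ℝ)..t, V (t - s) (f s)‖ ≤ c * K / (a - b) * Real.exp (-b * t) := by
  have hc : 0 ≤ c := by simpa using (norm_nonneg _).trans (hV 0 le_rfl)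
  have hK : 0 ≤ K := by simpa using (norm_nonneg _).trans (hf 0 le_rfl)
  have hintegrand : ∀ s ∈ Set.Ioc 0 t,
      ‖V (t - s) (f s)‖ ≤ c * K * Real.exp (-b * t) * Real.exp (-(a - b) * s) := by
    intro s hs
    calc ‖V (t - s) (f s)‖
        ≤ c * Real.exp (-b * (t - s)) * (K * Real.exp (-a * s)) :=
          (V (t - s)).le_of_opNorm_le_of_le (hV _ (sub_nonneg.2 hs.2)) (hf s hs.1.le)
      _ = c * K * (Real.exp (-b * (t - s)) * Real.exp (-a * s)) := by ring
      _ = c * K * Real.exp (-b * t) * Real.exp (-(a - b) * s) := by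
          rw [mul_assoc (c * K), ← Real.exp_add, ← Real.exp_add]
          ring_nf
  calc ‖∫ s in (0:ℝ)..t, V (t - s) (f s)‖
      ≤ ∫ s in (0:ℝ)..t, c * K * Real.exp (-b * t) * Real.exp (-(a - b) * s) :=
        intervalIntegral.norm_integral_le_of_norm_le ht (ae_of_all _ hintegrand)
          (Continuous.intervalIntegrable (by fun_prop) _ _)
    _ = c * K * Real.exp (-b * t) * ∫ s in (0:ℝ)..t, Real.exp (-(a - b) * s) :=
        intervalIntegral.integral_const_mul _ _
    _ ≤ c * K * Real.exp (-b * t) * (a - b)⁻¹ := by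
        gcongr
        exact integral_exp_neg_mul_le_inv (sub_pos.2 hab) ht
    _ = c * K / (a - b) * Real.exp (-b * t) := by ring

end ExponentialIntegrals

section FiniteRankCorrection

variable {𝕜 E F ι : Type*} [RCLike 𝕜] [NormedAddCommGroup E] [InnerProductSpace 𝕜 E]
  [NormedAddCommGroup F] [NormedSpace 𝕜 F]

lemma norm_sum_inner_smul_le (s : Finset ι) (φ : ι → F) (ψ : ι → E) (x : E) :
    ‖∑ i ∈ s, ⟪ψ i, x⟫_𝕜 • φ i‖ ≤ (∑ i ∈ s, ‖φ i‖ * ‖ψ i‖) * ‖x‖ := by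
  rw [Finset.sum_mul]
  refine norm_sum_le_of_le s fun i _ => ?_
  calc ‖⟪ψ i, x⟫_𝕜 • φ i‖ = ‖⟪ψ i, x⟫_𝕜‖ * ‖φ i‖ := norm_smul _ _
    _ ≤ ‖ψ i‖ * ‖x‖ * ‖φ i‖ := by
        gcongr
        exact norm_inner_le_norm _ _
    _ = ‖φ i‖ * ‖ψ i‖ * ‖x‖ := by ring

lemma norm_duhamel_integral_sub_tail_le [NormedSpace ℝ E] [NormedSpace ℝ F]
    {a b c K t : ℝ} (ha : 0 < a) (hab : b < a) (ht : 0 ≤ t) (S : Finset ι) (φ : ι → F)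
    (ψ : ι → E) {V : ℝ → E →L[𝕜] F} (hV : ∀ r, 0 ≤ r → ‖V r‖ ≤ c * Real.exp (-b * r))
    {f : ℝ → E} (hf : ∀ s, 0 ≤ s → ‖f s‖ ≤ K * Real.exp (-a * s)) :
    ‖(∫ s in (0:ℝ)..t, V (t - s) (f s)) - ∑ i ∈ S, ⟪ψ i, ∫ s in Set.Ioi t, f s⟫_𝕜 • φ i‖
      ≤ K * (c / (a - b) + a⁻¹ * ∑ i ∈ S, ‖φ i‖ * ‖ψ i‖) * Real.exp (-b * t) := by
  have hK : 0 ≤ K := by simpa using (norm_nonneg _).trans (hf 0 le_rfl)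
  have htail : ‖∫ s in Set.Ioi t, f s‖ ≤ K / a * Real.exp (-b * t) :=
    calc ‖∫ s in Set.Ioi t, f s‖
        ≤ K / a * Real.exp (-a * t) :=
          norm_integral_Ioi_le_of_norm_le_exp ha fun s hs => hf s (ht.trans hs.le)
      _ ≤ K / a * Real.exp (-b * t) := by gcongr
  calc _ ≤ ‖∫ s in (0:ℝ)..t, V (t - s) (f s)‖
          + ‖∑ i ∈ S, ⟪ψ i, ∫ s in Set.Ioi t, f s⟫_𝕜 • φ i‖ := norm_sub_le _ _
    _ ≤ c * K / (a - b) * Real.exp (-b * t)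
          + (∑ i ∈ S, ‖φ i‖ * ‖ψ i‖) * (K / a * Real.exp (-b * t)) := by
        gcongr
        · exact norm_duhamel_integral_le hab ht hV hf
        · exact (norm_sum_inner_smul_le S φ ψ _).trans (by gcongr)
    _ = K * (c / (a - b) + a⁻¹ * ∑ i ∈ S, ‖φ i‖ * ‖ψ i‖) * Real.exp (-b * t) := by ring

end FiniteRankCorrection

lemma norm_sq_le_of_exp_mul_norm_le {E : Type*} [SeminormedAddCommGroup E] {b N s : ℝ} {x : E}
    (hx : Real.exp (b * s) * ‖x‖ ≤ N) : ‖x‖ ^ 2 ≤ N ^ 2 * Real.exp (-(2 * b) * s) := by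
  have hweight : Real.exp (b * s) ^ 2 * Real.exp (-(2 * b) * s) = 1 := by
    rw [← Real.exp_nat_mul, ← Real.exp_add, Real.exp_eq_one_iff]
    push_cast
    ring
  calc ‖x‖ ^ 2 = (Real.exp (b * s) * ‖x‖) ^ 2 * Real.exp (-(2 * b) * s) := by
        rw [mul_pow, mul_right_comm, hweight, one_mul]
    _ ≤ N ^ 2 * Real.exp (-(2 * b) * s) := by gcongr

/-- In the decay setup, if additionally `‖v‖_b ≤ 2𝔠‖v₀‖`, then for every
`t ≥ 0`: `‖v_t - V(t)v₀‖ ≤ 4 Ĉ 𝔠² ‖v₀‖² e^{-bt}`; in particular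
`sup_{t≥0} e^{bt} ‖v_t - V(t)v₀‖ ≤ 4 Ĉ 𝔠² ‖v₀‖²`, so the amplitude agrees with its
linearization `V(t)v₀` up to an error quadratic in `‖v₀‖`. -/
theorem amplitude_linearization_error
    {H : Type*} [NormedAddCommGroup H] [InnerProductSpace ℝ H] [CompleteSpace H]
    {m : ℕ} (hm : 1 ≤ m)
    (b frakc CF : ℝ) (hb : 0 < b) (hfrakc : 1 ≤ frakc) (hCF : 0 < CF)
    (φ ψ : Fin m → H)
    (V : ℝ → H →L[ℝ] H)
    (hV : ∀ t : ℝ, 0 ≤ t → ‖V t‖ ≤ frakc * Real.exp (-b * t))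
    (hVcont : ∀ x : H, ContinuousOn (fun t => V t x) (Set.Ici (0:ℝ)))
    (v : ℝ → H) (hv : ContinuousOn v (Set.Ici (0:ℝ)))
    (nb : ℝ)
    (hnb : IsLUB {r : ℝ | ∃ t : ℝ, 0 ≤ t ∧ r = Real.exp (b * t) * ‖v t‖} nb)
    (G : ℝ → H)
    (hG : AEStronglyMeasurable G (volume.restrict (Set.Ici (0:ℝ))))
    (hGbound : ∀ s : ℝ, 0 ≤ s → ‖G s‖ ≤ CF * ‖v s‖ ^ 2)
    (heq : ∀ t : ℝ, 0 ≤ t →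
      v t = V t (v 0) + (∫ s in (0:ℝ)..t, V (t - s) (G s))
        - ∑ i, ⟪ψ i, ∫ s in Set.Ioi t, G s⟫_ℝ • φ i)
    (Ch : ℝ) (hCh : Ch = CF * (frakc / b + (1 / (2 * b)) * ∑ i, ‖φ i‖ * ‖ψ i‖))
    (hnb2 : nb ≤ 2 * frakc * ‖v 0‖) :
    ∀ t : ℝ, 0 ≤ t →
      ‖v t - V t (v 0)‖ ≤ 4 * Ch * frakc ^ 2 * ‖v 0‖ ^ 2 * Real.exp (-b * t) := by
  intro t ht
  have hv_decay : ∀ s, 0 ≤ s → Real.exp (b * s) * ‖v s‖ ≤ 2 * frakc * ‖v 0‖ :=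
    fun s hs => (hnb.1 ⟨s, hs, rfl⟩).trans hnb2
  have hG_decay : ∀ s, 0 ≤ s →
      ‖G s‖ ≤ CF * (2 * frakc * ‖v 0‖) ^ 2 * Real.exp (-(2 * b) * s) := fun s hs =>
    calc ‖G s‖ ≤ CF * ‖v s‖ ^ 2 := hGbound s hs
      _ ≤ CF * ((2 * frakc * ‖v 0‖) ^ 2 * Real.exp (-(2 * b) * s)) := by
          gcongr
          exact norm_sq_le_of_exp_mul_norm_le (hv_decay s hs)
      _ = CF * (2 * frakc * ‖v 0‖) ^ 2 * Real.exp (-(2 * b) * s) := (mul_assoc _ _ _).symm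
  calc ‖v t - V t (v 0)‖
      = ‖(∫ s in (0:ℝ)..t, V (t - s) (G s)) - ∑ i, ⟪ψ i, ∫ s in Set.Ioi t, G s⟫_ℝ • φ i‖ := by
        rw [heq t ht, add_sub_assoc, add_sub_cancel_left]
    _ ≤ CF * (2 * frakc * ‖v 0‖) ^ 2
          * (frakc / (2 * b - b) + (2 * b)⁻¹ * ∑ i, ‖φ i‖ * ‖ψ i‖) * Real.exp (-b * t) :=
        norm_duhamel_integral_sub_tail_le (by positivity) (by linarith) ht _ φ ψ hV hG_decay
    _ = 4 * Ch * frakc ^ 2 * ‖v 0‖ ^ 2 * Real.exp (-b * t) := by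
        rw [hCh, two_mul b, add_sub_cancel_right]
        ring
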